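/- Assume conditions (Cond1) and (CondAttr2). (i) If γ is a non-negative bounded complete trajectory of ℛ such that γ(t) ∈ D for all t ≤ t₀ for some t₀, then γ(t) = ξ_M(t) for all t ∈ ℝ; thus ξ_M is the unique non-negative bounded complete trajectory which is non-degenerate at −∞, and for every τ ∈ ℝ the function u = ξ_M|_{t≥τ} is the unique non-negative solution of (Incl) with u_τ = ξ_M(τ). (ii) If additionally b, ω ∈ W^{1,2}_loc(ℝ), then ξ_M is the unique bounded complete trajectory which is non-degenerate at −∞, and for every τ ∈ ℝ the function u = ξ_M|_{t≥τ} is the unique solution of (Incl) (in the class of all solutions) with u_τ = ξ_M(τ). -/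

import Mathlib

open MeasureTheory Set

noncomputable section

/-- Lebesgue measure restricted to the spatial interval `(0,1)`. -/
def μ01 : Measure ℝ := volume.restrict (Ioo (0:ℝ) 1)

/-- `H = L²(0,1)`. -/
abbrev Hsp : Type := Lp ℝ 2 μ01

/-- The Heaviside multifunction. -/
def heaviside (s : ℝ) : Set ℝ :=
  if s < 0 then {-1} else if s = 0 then Icc (-1) 1 else {1}

/-- Condition (Cond1). -/
structure Cond1 (b ω : ℝ → ℝ) (b0 b1 ω0 ω1 : ℝ) : Prop where
  contb : Continuous b
  contω : Continuous ω
  b0pos : 0 < b0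
  blb : ∀ t, b0 ≤ b t
  bub : ∀ t, b t ≤ b1
  ω0nonneg : 0 ≤ ω0
  ωlb : ∀ t, ω0 ≤ ω t
  ωub : ∀ t, ω t ≤ ω1

/-- `v ∈ H²(0,1) ∩ H¹₀(0,1)` with (weak) second derivative `w ∈ L²(0,1)`:
`v` has a representative that is continuous on `[0,1]`, vanishes at the boundary,
is differentiable on `(0,1)` and whose derivative is an antiderivative of `w`. -/
def InDomainA (v w : Hsp) : Prop :=
  ∃ vt : ℝ → ℝ, ContinuousOn vt (Icc 0 1) ∧ vt 0 = 0 ∧ vt 1 = 0 ∧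
    (∀ᵐ x ∂μ01, vt x = v x) ∧
    ∃ g : ℝ → ℝ,
      (∀ x ∈ Ioo (0:ℝ) 1, HasDerivAt vt (g x) x) ∧
      ∀ x ∈ Ioo (0:ℝ) 1, ∀ y ∈ Ioo (0:ℝ) 1, g x - g y = ∫ z in y..x, w z

/-- A strong solution of the inclusion on `[τ,∞)`, with explicit data:
`r` is the `L²`-selection, `u'` the time derivative, `uxx` the second spatial derivative. -/
structure IsStrongSolutionWith (b ω : ℝ → ℝ) (τ : ℝ) (u r u' uxx : ℝ → Hsp) : Prop where
  cont : ContinuousOn u (Ici τ)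
  rmem : ∀ T, τ < T → MemLp r 2 (volume.restrict (Ioo τ T))
  sel : ∀ᵐ t ∂(volume.restrict (Ioi τ)), ∀ᵐ x ∂μ01,
      ∃ h ∈ heaviside (u t x), r t x = b t * h + ω t * u t x
  dom : ∀ᵐ t ∂(volume.restrict (Ioi τ)), InDomainA (u t) (uxx t)
  eq : ∀ᵐ t ∂(volume.restrict (Ioi τ)), u' t = r t + uxx t
  fund : ∀ T1 T2 : ℝ, τ < T1 → T1 < T2 →
      IntervalIntegrable u' volume T1 T2 ∧
      ∀ t ∈ Icc T1 T2, u t = u T1 + ∫ s in T1..t, u' s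

/-- A strong solution of the inclusion on `[τ,∞)`. -/
def IsStrongSolution (b ω : ℝ → ℝ) (τ : ℝ) (u : ℝ → Hsp) : Prop :=
  ∃ r u' uxx, IsStrongSolutionWith b ω τ u r u' uxx

/-- The solution is non-negative on `[τ,∞)`. -/
def NonnegOn (u : ℝ → Hsp) (τ : ℝ) : Prop :=
  ∀ t, τ ≤ t → ∀ᵐ x ∂μ01, 0 ≤ u t x

/-- `v` is positive: it has a continuous representative on `[0,1]`
which is strictly positive on `(0,1)`. -/
def IsPositive (v : Hsp) : Prop :=
  ∃ vt : ℝ → ℝ, ContinuousOn vt (Icc 0 1) ∧ (∀ᵐ x ∂μ01, vt x = v x) ∧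
    ∀ x ∈ Ioo (0:ℝ) 1, 0 < vt x


/-- `vt` is a representative of `v` witnessing `v ∈ V = H¹₀(0,1)`. -/
def InVRep (v : Hsp) (vt : ℝ → ℝ) : Prop :=
  ContinuousOn vt (Icc 0 1) ∧ vt 0 = 0 ∧ vt 1 = 0 ∧ (∀ᵐ x ∂μ01, vt x = v x) ∧
  ∃ g : ℝ → ℝ, MemLp g 2 μ01 ∧
    ∀ x ∈ Icc (0:ℝ) 1, ∀ y ∈ Icc (0:ℝ) 1, vt x - vt y = ∫ z in y..x, g z

/-- `v ∈ D = {v ∈ V : v(x) > 0 for all x ∈ (0,1)}`. -/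
def InD (v : Hsp) : Prop :=
  ∃ vt : ℝ → ℝ, InVRep v vt ∧ ∀ x ∈ Ioo (0:ℝ) 1, 0 < vt x

/-- A complete trajectory of the inclusion. -/
def IsCompleteTrajectory (b ω : ℝ → ℝ) (φ : ℝ → Hsp) : Prop :=
  ∀ τ : ℝ, IsStrongSolution b ω τ φ

/-- A bounded function into `H`. -/
def BddTraj (φ : ℝ → Hsp) : Prop := ∃ M : ℝ, ∀ t : ℝ, ‖φ t‖ ≤ M

/-- The positive fixed point `v₁⁺` of the autonomous problem. -/
def v1plus (b ω : ℝ) (x : ℝ) : ℝ :=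
  if ω = 0 then -x ^ 2 / 2 + x / 2
  else b / ω * Real.cos (Real.sqrt ω * x)
    + b * (1 - Real.cos (Real.sqrt ω)) / (ω * Real.sin (Real.sqrt ω))
      * Real.sin (Real.sqrt ω * x)
    - b / ω

/-- `f'` is the weak derivative of `f : ℝ → ℝ` on the open set `S ⊆ ℝ`. -/
def HasWeakDerivOn (f f' : ℝ → ℝ) (S : Set ℝ) : Prop :=
  ∀ φ : ℝ → ℝ, ContDiff ℝ (⊤ : ℕ∞) φ → HasCompactSupport φ → tsupport φ ⊆ S →
    ∫ t in S, deriv φ t * f t = - ∫ t in S, φ t * f' t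

/-- `f ∈ W^{1,2}_loc(ℝ)`. -/
def W12loc (f : ℝ → ℝ) : Prop :=
  ∀ T1 T2 : ℝ, T1 < T2 → ∃ f' : ℝ → ℝ,
    HasWeakDerivOn f f' (Ioo T1 T2) ∧
    MemLp f 2 (volume.restrict (Ioo T1 T2)) ∧
    MemLp f' 2 (volume.restrict (Ioo T1 T2))

/-- The defining properties of the positive nonautonomous equilibrium `ξ_M`. -/
structure IsXiM (b ω : ℝ → ℝ) (b0 b1 ω0 ω1 : ℝ) (ξ : ℝ → Hsp) : Prop where
  traj : IsCompleteTrajectory b ω ξ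
  bdd : BddTraj ξ
  pos : ∀ t : ℝ, IsPositive (ξ t)
  dominates : ∀ γ : ℝ → Hsp, IsCompleteTrajectory b ω γ → BddTraj γ →
    ∀ t : ℝ, ∀ᵐ x ∂μ01, -(ξ t) x ≤ γ t x ∧ γ t x ≤ ξ t x
  bounds : ∀ t : ℝ, ∀ᵐ x ∂μ01,
    v1plus b0 ω0 x ≤ ξ t x ∧ ξ t x ≤ v1plus b1 ω1 x
  uniqueD : ∀ γ : ℝ → Hsp, IsCompleteTrajectory b ω γ → BddTraj γ →
    (∀ t : ℝ, InD (γ t)) → ∀ t : ℝ, γ t = ξ t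

open Filter Topology

lemma ac_of_dist_le {F : ℝ → ℝ} {G : ℝ → ℝ} {a b L : ℝ}
    (hG : AbsolutelyContinuousOnInterval G a b)
    (h : ∀ x ∈ uIcc a b, ∀ y ∈ uIcc a b, dist (F x) (F y) ≤ L * dist (G x) (G y)) :
    AbsolutelyContinuousOnInterval F a b := by
  unfold AbsolutelyContinuousOnInterval at *
  have h2 := hG.const_mul L
  rw [mul_zero] at h2
  refine squeeze_zero' (Eventually.of_forall fun E => Finset.sum_nonneg fun _ _ => dist_nonneg) ?_ h2
  filter_upwards [mem_inf_of_right (mem_principal_self _)] with E hE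
  rw [Finset.mul_sum]
  refine Finset.sum_le_sum fun i hi => ?_
  have := hE.1 i hi
  exact h _ this.1 _ this.2

lemma integral_μ01 (f : ℝ → ℝ) : ∫ x, f x ∂μ01 = ∫ x in (0:ℝ)..1, f x := by
  rw [intervalIntegral.integral_of_le zero_le_one, μ01, integral_Ioc_eq_integral_Ioo]

instance : IsFiniteMeasure μ01 := by unfold μ01; infer_instance

lemma ae_μ01 {p : ℝ → Prop} : (∀ᵐ x ∂μ01, p x) ↔ ∀ᵐ x : ℝ, x ∈ Ioo (0:ℝ) 1 → p x := by
  rw [μ01, ae_restrict_iff' measurableSet_Ioo]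

lemma ae_Ioo : ∀ᵐ x ∂μ01, x ∈ Ioo (0:ℝ) 1 := by
  rw [ae_μ01]; simp

lemma hsp_integrable (w : Hsp) : Integrable w μ01 :=
  (Lp.memLp w).integrable (by norm_num)

lemma hsp_ii (w : Hsp) : IntervalIntegrable w volume 0 1 := by
  rw [intervalIntegrable_iff_integrableOn_Ioo_of_le zero_le_one]
  exact hsp_integrable w

lemma domA_rep {v w : Hsp} (h : InDomainA v w) : ∃ vt G : ℝ → ℝ, 
    AbsolutelyContinuousOnInterval vt 0 1 ∧ AbsolutelyContinuousOnInterval G 0 1 ∧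
    vt 0 = 0 ∧ vt 1 = 0 ∧ (∀ᵐ x ∂μ01, vt x = v x) ∧
    (∀ x ∈ Ioo (0:ℝ) 1, HasDerivAt vt (G x) x) ∧ ∀ᵐ x ∂μ01, deriv G x = w x := by
  obtain ⟨vt, hc, h0, h1, hae, g, hg, hgw⟩ := h
  have hw := hsp_ii w
  have hh : (1/2:ℝ) ∈ uIcc (0:ℝ) 1 := by rw [uIcc_of_le zero_le_one]; constructor <;> norm_num
  have hac : AbsolutelyContinuousOnInterval (fun x => g (1/2) + ∫ z in (1/2:ℝ)..x, w z) 0 1 := by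
    refine ac_of_dist_le (L := 1) (hw.absolutelyContinuousOnInterval_intervalIntegral hh) ?_
    intro x _ y _
    simp
  have hder : ∀ x ∈ Ioo (0:ℝ) 1, HasDerivAt vt (g (1/2) + ∫ z in (1/2:ℝ)..x, w z) x := by
    intro x hx
    rw [← hgw x hx (1/2) (by constructor <;> norm_num)]
    simpa using hg x hx
  refine ⟨vt, fun x => g (1/2) + ∫ z in (1/2:ℝ)..x, w z, ?_, hac, h0, h1, hae, hder, ?_⟩
  · obtain ⟨C, hC⟩ := hac.exists_bound
    rw [uIcc_of_le zero_le_one] at hC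
    have hl : LipschitzOnWith (Real.toNNReal C) vt (Ioo 0 1) := by
      refine (convex_Ioo 0 1).lipschitzOnWith_of_nnnorm_hasDerivWithin_le
        (fun x hx => (hder x hx).hasDerivWithinAt) ?_
      intro x hx
      rw [← NNReal.coe_le_coe, coe_nnnorm]
      exact (hC x (Ioo_subset_Icc_self hx)).trans (Real.le_coe_toNNReal C)
    have hl2 : LipschitzOnWith (Real.toNNReal C) vt (closure (Ioo 0 1)) := by
      refine hl.closure ?_
      rwa [closure_Ioo zero_ne_one]
    rw [closure_Ioo zero_ne_one] at hl2
    apply LipschitzOnWith.absolutelyContinuousOnInterval (K := Real.toNNReal C)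
    rwa [uIcc_of_le zero_le_one]
  · rw [ae_μ01]
    filter_upwards [hw.ae_hasDerivAt_integral] with x hx hx2
    have := hx (by rw [uIcc_of_le zero_le_one]; exact Ioo_subset_Icc_self hx2) _ hh
    exact (this.const_add _).deriv

lemma domA_dissip {v w : Hsp} (h : InDomainA v w) : ∫ x, w x * max (v x) 0 ∂μ01 ≤ 0 := by
  obtain ⟨vt, G, hv, hG, h0, h1, hae, hd, hGw⟩ := domA_rep h
  have hp : AbsolutelyContinuousOnInterval (fun x => max (vt x) 0) 0 1 := by
    refine ac_of_dist_le (L := 1) hv ?_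
    intro x _ y _
    simpa [Real.dist_eq] using abs_max_sub_max_le_abs (vt x) (vt y) 0
  have e : ∫ x, w x * max (v x) 0 ∂μ01 = ∫ x, max (vt x) 0 * deriv G x ∂μ01 := by
    refine integral_congr_ae ?_
    filter_upwards [hae, hGw] with x a b
    rw [a, b, mul_comm]
  rw [e, integral_μ01, hp.integral_mul_deriv_eq_deriv_mul hG, h0, h1]
  simp only [max_self, zero_mul, sub_zero, zero_sub, neg_nonpos]
  rw [← integral_μ01]
  refine integral_nonneg_of_ae ?_
  filter_upwards [ae_Ioo] with x hx
  have hdx := hd x hx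
  by_cases hdp : DifferentiableAt ℝ (fun x => max (vt x) 0) x
  · have t1 := hdp.hasDerivAt.tendsto_slope
    have t2 := hdx.tendsto_slope
    refine ge_of_tendsto (t1.mul t2) (Eventually.of_forall fun y => ?_)
    simp only [slope_def_field]
    rw [div_mul_div_comm]
    refine div_nonneg ?_ (mul_self_nonneg _)
    rcases le_total (vt x) (vt y) with h | h
    · exact mul_nonneg (sub_nonneg.2 (max_le_max_right 0 h)) (sub_nonneg.2 h)
    · exact mul_nonneg_of_nonpos_of_nonpos (sub_nonpos.2 (max_le_max_right 0 h)) (sub_nonpos.2 h)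
  · rw [deriv_zero_of_not_differentiableAt hdp]; simp

lemma domA_sin {v w : Hsp} (h : InDomainA v w) :
    ∫ x, w x * Real.sin (Real.pi * x) ∂μ01 = -Real.pi^2 * ∫ x, v x * Real.sin (Real.pi * x) ∂μ01 := by
  obtain ⟨vt, G, hv, hG, h0, h1, hae, hd, hGw⟩ := domA_rep h
  have hs' : ∀ x, HasDerivAt (fun x => Real.sin (Real.pi * x)) (Real.pi * Real.cos (Real.pi * x)) x := by
    intro x
    have := (hasDerivAt_id x).const_mul Real.pi |>.sin
    simpa [mul_comm] using this
  have hc' : ∀ x, HasDerivAt (fun x => Real.pi * Real.cos (Real.pi * x)) (-Real.pi^2 * Real.sin (Real.pi * x)) x := by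
    intro x
    have := ((hasDerivAt_id x).const_mul Real.pi |>.cos).const_mul Real.pi
    convert! this using 1
    simp; ring
  have hs : AbsolutelyContinuousOnInterval (fun x => Real.sin (Real.pi * x)) 0 1 := by
    apply ContDiffOn.absolutelyContinuousOnInterval
    fun_prop
  have hc : AbsolutelyContinuousOnInterval (fun x => Real.pi * Real.cos (Real.pi * x)) 0 1 := by
    apply ContDiffOn.absolutelyContinuousOnInterval
    fun_prop
  have e : ∫ x, w x * Real.sin (Real.pi * x) ∂μ01 = ∫ x, Real.sin (Real.pi * x) * deriv G x ∂μ01 := by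
    refine integral_congr_ae ?_
    filter_upwards [hGw] with x b
    rw [b, mul_comm]
  have e2 : ∫ x, v x * Real.sin (Real.pi * x) ∂μ01 = ∫ x, vt x * Real.sin (Real.pi * x) ∂μ01 := by
    refine integral_congr_ae ?_
    filter_upwards [hae] with x b
    rw [b]
  have e3 : ∫ x, deriv (fun x => Real.sin (Real.pi * x)) x * G x ∂μ01 = 
     ∫ x, (Real.pi * Real.cos (Real.pi * x)) * deriv vt x ∂μ01 := by
    refine integral_congr_ae ?_
    filter_upwards [ae_Ioo] with x hx
    rw [(hs' x).deriv, (hd x hx).deriv]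
  rw [e, integral_μ01, hs.integral_mul_deriv_eq_deriv_mul hG, ← integral_μ01, e3, integral_μ01,
    hc.integral_mul_deriv_eq_deriv_mul hv, h0, h1, e2, ← integral_μ01]
  simp only [(hc' _).deriv, mul_assoc]
  rw [integral_const_mul]
  simp [mul_comm]

lemma hsp_ii' (w : Hsp) {x y : ℝ} (hx : x ∈ Ioo (0:ℝ) 1) (hy : y ∈ Ioo (0:ℝ) 1) :
    IntervalIntegrable w volume x y := by
  refine (hsp_ii w).mono_set ?_
  rw [uIcc_of_le zero_le_one]
  exact (convex_Icc (0:ℝ) 1).ordConnected.uIcc_subset (Ioo_subset_Icc_self hx) (Ioo_subset_Icc_self hy)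

lemma ii_congr {f g : ℝ → ℝ} (h : f =ᵐ[μ01] g) {x y : ℝ} (hx : x ∈ Ioo (0:ℝ) 1)
    (hy : y ∈ Ioo (0:ℝ) 1) : ∫ z in x..y, f z = ∫ z in x..y, g z := by
  refine intervalIntegral.integral_congr_ae ?_
  have := ae_μ01.1 h
  filter_upwards [this] with z hz hz2
  refine hz ?_
  have := (convex_Ioo (0:ℝ) 1).ordConnected.uIcc_subset hx hy
  exact this (uIoc_subset_uIcc hz2)

lemma domA_comb {v1 w1 v2 w2 : Hsp} (h1 : InDomainA v1 w1) (h2 : InDomainA v2 w2) (c : ℝ) :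
    InDomainA (v1 - c • v2) (w1 - c • w2) := by
  obtain ⟨a, hc, h0, h1, hae, g, hg, hgw⟩ := h1
  obtain ⟨a', hc', h0', h1', hae', g', hg', hgw'⟩ := h2
  refine ⟨fun x => a x - c * a' x, hc.sub (hc'.const_mul c), by simp [h0, h0'], by simp [h1, h1'], ?_,
    fun x => g x - c * g' x, ?_, ?_⟩
  · filter_upwards [hae, hae', Lp.coeFn_sub v1 (c • v2), Lp.coeFn_smul c v2] with x e1 e2 e3 e4
    rw [e3, Pi.sub_apply, e4, Pi.smul_apply, smul_eq_mul, e1, e2]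
  · intro x hx
    exact (hg x hx).sub ((hg' x hx).const_mul c)
  · intro x hx y hy
    have : (w1 - c • w2 : Hsp) =ᵐ[μ01] fun z => w1 z - c * w2 z := by
      filter_upwards [Lp.coeFn_sub w1 (c • w2), Lp.coeFn_smul c w2] with x e3 e4
      rw [e3, Pi.sub_apply, e4, Pi.smul_apply, smul_eq_mul]
    rw [ii_congr this hy hx, intervalIntegral.integral_sub (hsp_ii' _ hy hx) ((hsp_ii' _ hy hx).const_mul c),
      intervalIntegral.integral_const_mul, ← hgw x hx y hy, ← hgw' x hx y hy]
    ring

lemma inner_eq (f g : Hsp) : inner ℝ f g = ∫ x, f x * g x ∂μ01 := by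
  rw [L2.inner_def]
  refine integral_congr_ae (Eventually.of_forall fun x => ?_)
  simp [mul_comm]

lemma inner_int (f g : Hsp) : Integrable (fun x => f x * g x) μ01 := by
  have := L2.integrable_inner (𝕜 := ℝ) f g
  refine this.congr (Eventually.of_forall fun x => ?_)
  simp [mul_comm]

/-- positive part -/
def PP (y : Hsp) : Hsp := Lp.posPart y

lemma PP_coe (y : Hsp) : ∀ᵐ x ∂μ01, PP y x = max (y x) 0 := Lp.coeFn_posPart y

lemma PP_lip (y k : Hsp) : ‖PP y - PP k‖ ≤ ‖y - k‖ := by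
  refine Lp.norm_le_norm_of_ae_le ?_
  filter_upwards [PP_coe y, PP_coe k, Lp.coeFn_sub y k, Lp.coeFn_sub (PP y) (PP k)] with x a b c d
  rw [c, d, Pi.sub_apply, Pi.sub_apply, a, b]
  exact abs_max_sub_max_le_abs _ _ _

lemma PP_norm (y : Hsp) : ‖PP y‖ ≤ ‖y‖ := by
  refine Lp.norm_le_norm_of_ae_le ?_
  filter_upwards [PP_coe y] with x a
  rw [a]
  simpa using abs_max_sub_max_le_abs (y x) 0 0

lemma PP_zero_iff {y : Hsp} : PP y = 0 ↔ ∀ᵐ x ∂μ01, y x ≤ 0 := by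
  constructor
  · intro h
    have h0 := Lp.coeFn_zero ℝ 2 μ01
    filter_upwards [PP_coe y, h0] with x a b
    rw [h, b] at a
    simpa using a.symm
  · intro h
    apply Lp.ext
    filter_upwards [h, PP_coe y, Lp.coeFn_zero ℝ 2 μ01] with x a b c
    rw [b, c]; simpa using a

lemma PP_quad (y k : Hsp) :
    |‖PP k‖^2 - ‖PP y‖^2 - 2 * inner ℝ (PP y) (k - y)| ≤ ‖k - y‖^2 := by
  have e : ∀ f : Hsp, ‖f‖^2 = ∫ x, f x * f x ∂μ01 := fun f => by
    rw [← inner_eq, real_inner_self_eq_norm_sq]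
  rw [e, e, e, inner_eq, ← integral_const_mul, ← integral_sub (inner_int _ _) (inner_int _ _),
    ← integral_sub (f := fun x => PP k x * PP k x - PP y x * PP y x)
      ((inner_int _ _).sub (inner_int _ _)) ((inner_int _ _).const_mul 2)]
  refine (abs_integral_le_integral_abs).trans ?_
  refine integral_mono_ae (((inner_int _ _).sub (inner_int _ _)).sub ((inner_int _ _).const_mul 2)).abs
    (inner_int _ _) ?_
  filter_upwards [PP_coe y, PP_coe k, Lp.coeFn_sub k y] with x a b c
  simp only [a, b, c, Pi.sub_apply]
  rw [abs_le]
  rcases le_total (y x) 0 with h1 | h1 <;> rcases le_total (k x) 0 with h2 | h2 <;>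
    simp only [max_eq_left, max_eq_right, h1, h2] <;> constructor <;> nlinarith

lemma PP_deriv {y : ℝ → Hsp} {y' : Hsp} {t : ℝ} (h : HasDerivAt y y' t) :
    HasDerivAt (fun s => ‖PP (y s)‖^2) (2 * inner ℝ (PP (y t)) y') t := by
  have hF : HasFDerivAt (fun k : Hsp => ‖PP k‖^2) ((2:ℝ) • innerSL ℝ (PP (y t))) (y t) := by
    refine HasFDerivAt.of_isLittleO ?_
    have h1 : (fun k : Hsp => ‖k - y t‖^2) =o[𝓝 (y t)] fun k => k - y t := by
      have := Asymptotics.isLittleO_norm_pow_id (E' := Hsp) one_lt_two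
      have h2 : Tendsto (fun k : Hsp => k - y t) (𝓝 (y t)) (𝓝 0) := by
        have : Continuous fun k : Hsp => k - y t := by fun_prop
        simpa using this.tendsto (y t)
      exact this.comp_tendsto h2
    refine Asymptotics.IsBigO.trans_isLittleO ?_ h1
    refine Asymptotics.IsBigO.of_bound 1 (Eventually.of_forall fun k => ?_)
    simpa using PP_quad (y t) k
  have := hF.comp_hasDerivAt t h
  exact this.congr_deriv (by simp)

lemma energy_step {y y' : ℝ → Hsp} {a b C : ℝ} (hab : a ≤ b)
    (hi : IntervalIntegrable y' volume a b)
    (hf : ∀ t ∈ Icc a b, y t = y a + ∫ s in a..t, y' s)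
    (hd : ∀ᵐ t : ℝ, t ∈ Ioo a b → inner ℝ (y' t) (PP (y t)) ≤ C * ‖PP (y t)‖^2) :
    Real.exp (-(2*C) * b) * ‖PP (y b)‖^2 ≤ Real.exp (-(2*C) * a) * ‖PP (y a)‖^2 := by
  have hu : uIcc a b = Icc a b := uIcc_of_le hab
  have hsub : ∀ s ∈ Icc a b, ∀ t ∈ Icc a b, IntervalIntegrable y' volume s t := by
    intro s hs t ht
    refine hi.mono_set ?_
    rw [hu]
    exact ordConnected_Icc.uIcc_subset hs ht
  have ha : a ∈ Icc a b := ⟨le_rfl, hab⟩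
  have hdiff : ∀ s ∈ Icc a b, ∀ t ∈ Icc a b, y t - y s = ∫ r in s..t, y' r := by
    intro s hs t ht
    rw [hf t ht, hf s hs, ← intervalIntegral.integral_interval_sub_left (hsub a ha t ht) (hsub a ha s hs)]
    abel
  have hG := hi.norm.absolutelyContinuousOnInterval_intervalIntegral (c := a) (by rw [hu]; exact ha)
  have hyl : ∀ s ∈ Icc a b, ∀ t ∈ Icc a b, ‖y s - y t‖ ≤ dist (∫ r in a..s, ‖y' r‖) (∫ r in a..t, ‖y' r‖) := by
    intro s hs t ht
    rw [hdiff t ht s hs, Real.dist_eq, intervalIntegral.integral_interval_sub_left (hsub a ha s hs).norm (hsub a ha t ht).norm]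
    exact intervalIntegral.norm_integral_le_abs_integral_norm
  obtain ⟨M, hM⟩ : ∃ M, ∀ t ∈ Icc a b, ‖y t‖ ≤ M := by
    obtain ⟨B, hB⟩ := hG.exists_bound
    rw [hu] at hB
    refine ⟨‖y a‖ + B, fun t ht => ?_⟩
    have := hyl t ht a ha
    simp only [intervalIntegral.integral_same, dist_zero_right] at this
    have h2 := hB t ht
    have h3 := norm_le_norm_add_norm_sub' (y t) (y a)
    linarith
  have hAC : AbsolutelyContinuousOnInterval (fun t => ‖PP (y t)‖^2) a b := by
    refine ac_of_dist_le (L := 2*M) hG ?_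
    rw [hu]
    intro s hs t ht
    refine le_trans ?_ (mul_le_mul_of_nonneg_left (hyl s hs t ht) (by linarith [norm_nonneg (y s), hM s hs]))
    have h1 := (abs_norm_sub_norm_le (PP (y s)) (PP (y t))).trans (PP_lip (y s) (y t))
    have h2 := (PP_norm (y s)).trans (hM s hs)
    have h3 := (PP_norm (y t)).trans (hM t ht)
    rw [Real.dist_eq, sq_sub_sq, abs_mul, abs_of_nonneg (by positivity : 0 ≤ ‖PP (y s)‖ + ‖PP (y t)‖)]
    exact mul_le_mul (by linarith) h1 (abs_nonneg _) (by linarith [norm_nonneg (y s), hM s hs])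
  have hE : AbsolutelyContinuousOnInterval (fun t => Real.exp (-(2*C) * t)) a b := by
    apply ContDiffOn.absolutelyContinuousOnInterval
    fun_prop
  have hP := hE.fun_mul hAC
  have key := hP.integral_deriv_eq_sub
  have : ∫ t in a..b, deriv (fun t => Real.exp (-(2*C) * t) * ‖PP (y t)‖^2) t ≤ 0 := by
    rw [intervalIntegral.integral_of_le hab, integral_Ioc_eq_integral_Ioo]
    refine integral_nonpos_of_ae ?_
    rw [EventuallyLE, ae_restrict_iff' measurableSet_Ioo]
    filter_upwards [hd, hi.ae_hasDerivAt_integral] with t h1 h2 ht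
    have htI := Ioo_subset_Icc_self ht
    have h3 := h2 (by rw [hu]; exact htI) a (by rw [hu]; exact ha)
    have h4 : HasDerivAt y (y' t) t := by
      refine (h3.const_add (y a)).congr_of_eventuallyEq ?_
      filter_upwards [Ioo_mem_nhds ht.1 ht.2] with s hs
      exact hf s (Ioo_subset_Icc_self hs)
    have h5 : HasDerivAt (fun t => Real.exp (-(2*C) * t)) (Real.exp (-(2*C) * t) * (-(2*C))) t := by
      simpa using ((hasDerivAt_id t).const_mul (-(2*C))).exp
    rw [(h5.fun_mul (PP_deriv h4)).deriv]
    have h6 := h1 ht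
    rw [real_inner_comm] at h6
    simp only [Pi.zero_apply]
    have h7 := Real.exp_pos (-(2*C) * t)
    nlinarith
  linarith

lemma comparison {y y' : ℝ → Hsp} {τ T C : ℝ}
    (hc : ContinuousOn y (Icc τ T)) 
    (hi : ∀ T1 T2, τ < T1 → T1 < T2 → T2 ≤ T → IntervalIntegrable y' volume T1 T2 ∧
       ∀ t ∈ Icc T1 T2, y t = y T1 + ∫ s in T1..t, y' s)
    (hd : ∀ᵐ t : ℝ, t ∈ Ioo τ T → inner ℝ (y' t) (PP (y t)) ≤ C * ‖PP (y t)‖^2)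
    (h0 : ∀ᵐ x ∂μ01, y τ x ≤ 0) : ∀ t ∈ Icc τ T, ∀ᵐ x ∂μ01, y t x ≤ 0 := by
  intro t ht
  rcases ht.1.eq_or_lt with rfl | hlt
  · exact h0
  rw [← PP_zero_iff]
  have hcF : ContinuousOn (fun s => Real.exp (-(2*C) * s) * ‖PP (y s)‖^2) (Icc τ T) := by
    have h1 : ContinuousOn (fun s => PP (y s)) (Icc τ T) := 
      (Lp.continuous_posPart (p := 2) (μ := μ01)).comp_continuousOn hc
    refine ContinuousOn.mul (by fun_prop) (h1.norm.pow 2)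
  have hτ : τ ∈ Icc τ T := ⟨le_rfl, ht.1.trans ht.2⟩
  have hlim : Tendsto (fun s => Real.exp (-(2*C) * s) * ‖PP (y s)‖^2) (𝓝[>] τ) (𝓝 0) := by
    have h1 := (hcF τ hτ).mono (show Ioo τ t ⊆ Icc τ T from fun s hs => ⟨hs.1.le, hs.2.le.trans ht.2⟩)
    have h2 := h1.tendsto
    rw [PP_zero_iff.2 h0, nhdsWithin_Ioo_eq_nhdsGT hlt] at h2
    simpa using h2
  have hle : Real.exp (-(2*C) * t) * ‖PP (y t)‖^2 ≤ 0 := by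
    refine ge_of_tendsto hlim ?_
    filter_upwards [Ioo_mem_nhdsGT hlt] with s hs
    obtain ⟨i1, i2⟩ := hi s t hs.1 hs.2 ht.2
    refine energy_step hs.2.le i1 i2 ?_
    filter_upwards [hd] with r hr hr2
    exact hr ⟨hs.1.trans hr2.1, hr2.2.trans_le ht.2⟩
  have h7 := Real.exp_pos (-(2*C) * t)
  have : ‖PP (y t)‖^2 ≤ 0 := by
    by_contra hcon
    push Not at hcon
    have := mul_pos h7 hcon
    linarith
  have h8 : ‖PP (y t)‖ = 0 := by
    have := sq_nonneg ‖PP (y t)‖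
    exact pow_eq_zero_iff (two_ne_zero) |>.1 (le_antisymm ‹_› this)
  exact norm_eq_zero.1 h8

lemma barrier (K m : ℝ) (hK : 0 < K) (hm : 0 < m) : ∃ P Q : Hsp, InDomainA P Q ∧
    ∀ᵐ x ∂μ01, 0 ≤ P x ∧ P x ≤ 2 * K / m * (x * (1 - x)) ∧ K ≤ m^2 * P x - Q x := by
  let p : ℝ → ℝ := fun x => K / m^2 * ((1 - Real.exp (-m * x)) * (1 - Real.exp (-m * (1 - x))))
  let g : ℝ → ℝ := fun x => K / m * (Real.exp (-m * x) - Real.exp (-m * (1 - x)))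
  let q : ℝ → ℝ := fun x => -K * (Real.exp (-m * x) + Real.exp (-m * (1 - x)))
  have e1 : ∀ x, HasDerivAt (fun x => Real.exp (-m * x)) (Real.exp (-m * x) * (-m)) x := by
    intro x
    simpa using ((hasDerivAt_id x).const_mul (-m)).exp
  have e2 : ∀ x, HasDerivAt (fun x => Real.exp (-m * (1 - x))) (Real.exp (-m * (1 - x)) * m) x := by
    intro x
    simpa using (((hasDerivAt_id x).const_sub 1).const_mul (-m)).exp
  have hpc : Continuous p := by fun_prop
  have hqc : Continuous q := by fun_prop
  have hmem : ∀ f : ℝ → ℝ, Continuous f → MemLp f 2 μ01 := by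
    intro f hf
    obtain ⟨C, hC⟩ := isCompact_Icc (a := (0:ℝ)) (b := 1) |>.exists_bound_of_continuousOn hf.continuousOn
    refine MemLp.of_bound hf.aestronglyMeasurable C ?_
    filter_upwards [ae_Ioo] with x hx
    exact hC x (Ioo_subset_Icc_self hx)
  have hP := (hmem p hpc).coeFn_toLp
  have hQ := (hmem q hqc).coeFn_toLp
  have hexp : ∀ x, Real.exp (-m * x) * Real.exp (-m * (1 - x)) = Real.exp (-m) := by
    intro x; rw [← Real.exp_add]; ring_nf
  refine ⟨(hmem p hpc).toLp, (hmem q hqc).toLp, ⟨p, hpc.continuousOn, by simp [p], by simp [p], ?_, g, ?_, ?_⟩, ?_⟩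
  · filter_upwards [hP] with x hx using hx.symm
  · intro x _
    have := (((e1 x).const_sub 1).mul ((e2 x).const_sub 1)).const_mul (K / m^2)
    refine this.congr_deriv ?_
    simp only [g]
    field_simp
    ring
  · intro x hx y hy
    rw [ii_congr hQ hy hx]
    have hg : ∀ x, HasDerivAt g (q x) x := by
      intro x
      refine (((e1 x).sub (e2 x)).const_mul (K / m)).congr_deriv ?_
      simp only [q]; field_simp; ring
    rw [intervalIntegral.integral_eq_sub_of_hasDerivAt (fun z _ => hg z) (hqc.intervalIntegrable _ _)]
  · filter_upwards [hP, hQ, ae_Ioo] with x h1 h2 hx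
    rw [h1, h2]
    have a1 : Real.exp (-m * x) ≤ 1 := Real.exp_le_one_iff.2 (by nlinarith [hx.1])
    have a2 : Real.exp (-m * (1 - x)) ≤ 1 := Real.exp_le_one_iff.2 (by nlinarith [hx.2])
    have b1 := Real.add_one_le_exp (-m * x)
    have b2 := Real.add_one_le_exp (-m * (1 - x))
    have c1 := Real.exp_pos (-m * x)
    have c2 := Real.exp_pos (-m * (1 - x))
    have hKm : 0 < K / m^2 := by positivity
    refine ⟨mul_nonneg hKm.le (mul_nonneg (by linarith) (by linarith)), ?_, ?_⟩
    · have : 2 * K / m * (x * (1 - x)) = K / m^2 * (2 * m * (x * (1 - x))) := by field_simp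
      rw [this]
      refine mul_le_mul_of_nonneg_left ?_ hKm.le
      rcases le_total x (1/2) with h | h
      · calc (1 - Real.exp (-m * x)) * (1 - Real.exp (-m * (1 - x))) ≤ (m * x) * 1 :=
            mul_le_mul (by linarith) (by linarith) (by linarith) (by nlinarith [hx.1])
          _ ≤ _ := by nlinarith [mul_nonneg hm.le hx.1.le]
      · calc (1 - Real.exp (-m * x)) * (1 - Real.exp (-m * (1 - x))) ≤ 1 * (m * (1 - x)) :=
            mul_le_mul (by linarith) (by linarith) (by linarith) (by norm_num)
          _ ≤ _ := by nlinarith [mul_nonneg hm.le (sub_nonneg.2 hx.2.le)]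
    · have h3 : m^2 * p x - q x = K * (1 + Real.exp (-m * x) * Real.exp (-m * (1 - x))) := by
        simp only [p, q]; field_simp; ring
      rw [h3, hexp]
      nlinarith [Real.exp_pos (-m)]

lemma v1plus_lb {b0 ω0 : ℝ} (hb : 0 < b0) (h0 : 0 ≤ ω0) (hω : ω0 < Real.pi^2) :
    ∃ c > 0, ∀ x ∈ Ioo (0:ℝ) 1, c * (x * (1 - x)) ≤ v1plus b0 ω0 x := by
  rcases h0.eq_or_lt with rfl | hpos
  · refine ⟨1/2, by norm_num, fun x hx => ?_⟩
    simp only [v1plus, if_true]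
    nlinarith
  · have hs0 : 0 < Real.sqrt ω0 := Real.sqrt_pos.2 hpos
    have hsp : Real.sqrt ω0 < Real.pi := (Real.sqrt_lt' Real.pi_pos).2 hω
    have hss : Real.sqrt ω0 ^ 2 = ω0 := Real.sq_sqrt h0
    set s := Real.sqrt ω0
    refine ⟨2 * b0 / Real.pi^2, by positivity, fun x hx => ?_⟩
    have hcos : 0 < Real.cos (s / 2) := Real.cos_pos_of_mem_Ioo ⟨by linarith, by linarith⟩
    have hcos1 : Real.cos (s / 2) ≤ 1 := Real.cos_le_one _
    have hsin : 0 < Real.sin (s / 2) := Real.sin_pos_of_pos_of_lt_pi (by linarith) (by linarith)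
    have k1 := Real.mul_le_sin (x := s * x / 2) (by nlinarith [hx.1]) (by nlinarith [hx.2])
    have k2 := Real.mul_le_sin (x := s * (1 - x) / 2) (by nlinarith [hx.2]) (by nlinarith [hx.1])
    have k3 : (2 / Real.pi * (s * x / 2)) * (2 / Real.pi * (s * (1 - x) / 2)) ≤
        Real.sin (s * x / 2) * Real.sin (s * (1 - x) / 2) := by
      have : 0 ≤ 1 - x := by linarith [hx.2]
      have hx1 := hx.1
      exact mul_le_mul k1 k2 (by positivity) (le_trans (by positivity) k1)
    have key : v1plus b0 ω0 x = b0 / ω0 / Real.cos (s / 2) *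
        (2 * (Real.sin (s * x / 2) * Real.sin (s * (1 - x) / 2))) := by
      rw [v1plus, if_neg hpos.ne']
      have d1 : Real.cos s = 2 * Real.cos (s/2)^2 - 1 := by
        rw [← Real.cos_two_mul]; ring_nf
      have d2 : Real.sin s = 2 * Real.sin (s/2) * Real.cos (s/2) := by
        rw [← Real.sin_two_mul]; ring_nf
      have d3 : Real.cos (s * x) = 1 - 2 * Real.sin (s * x / 2)^2 := by
        have := Real.cos_two_mul (s * x / 2)
        have h := Real.sin_sq_add_cos_sq (s * x / 2)
        rw [show s * x = 2 * (s * x / 2) by ring, this]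
        rw [show 2 * (s * x / 2) / 2 = s * x / 2 by ring]
        linarith
      have d4 : Real.sin (s * x) = 2 * Real.sin (s * x / 2) * Real.cos (s * x / 2) := by
        rw [← Real.sin_two_mul]; ring_nf
      have d5 : Real.sin (s * (1 - x) / 2) = Real.sin (s/2) * Real.cos (s*x/2) - Real.cos (s/2) * Real.sin (s*x/2) := by
        rw [← Real.sin_sub]; ring_nf
      have d6 : 1 - Real.cos s = 2 * Real.sin (s/2)^2 := by
        rw [d1]; linarith [Real.sin_sq_add_cos_sq (s/2)]
      change b0 / ω0 * Real.cos (s * x) + b0 * (1 - Real.cos s) / (ω0 * Real.sin s) * Real.sin (s * x) - b0 / ω0 = _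
      rw [d6, d2, d3, d4, d5]
      field_simp
      ring
    rw [key]
    have : 2 * b0 / Real.pi^2 * (x * (1 - x)) = b0 / ω0 * (2 * ((2 / Real.pi * (s * x / 2)) * (2 / Real.pi * (s * (1 - x) / 2)))) := by
      rw [← hss]; field_simp
    rw [this]
    have hx2 : 0 ≤ 1 - x := by linarith [hx.2]
    have hx1 := hx.1
    refine mul_le_mul ?_ (by linarith) (by positivity) (by positivity)
    rw [le_div_iff₀ hcos]
    have : 0 < b0 / ω0 := by positivity
    nlinarith

lemma heav_mem {s h : ℝ} (hh : h ∈ heaviside s) : h ∈ Icc (-1:ℝ) 1 := by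
  unfold heaviside at hh
  split_ifs at hh
  · rw [mem_singleton_iff] at hh; rw [hh]; constructor <;> norm_num
  · exact hh
  · rw [mem_singleton_iff] at hh; rw [hh]; constructor <;> norm_num

lemma heav_pos {s h : ℝ} (hs : 0 < s) (hh : h ∈ heaviside s) : h = 1 := by
  unfold heaviside at hh
  rw [if_neg (not_lt.2 hs.le), if_neg hs.ne'] at hh
  exact hh

lemma coe_comb (a b c : Hsp) (k : ℝ) : ∀ᵐ x ∂μ01, (a - b - k • c : Hsp) x = a x - b x - k * c x := by
  filter_upwards [Lp.coeFn_sub (a - b) (k • c), Lp.coeFn_sub a b, Lp.coeFn_smul k c] with x h1 h2 h3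
  rw [h1, Pi.sub_apply, h2, Pi.sub_apply, h3, Pi.smul_apply, smul_eq_mul]

lemma step_cmp {b ω : ℝ → ℝ} {τ T N C : ℝ} {u1 r1 u1' q1 u2 r2 u2' q2 : ℝ → Hsp} {P Q : Hsp}
    (S1 : IsStrongSolutionWith b ω τ u1 r1 u1' q1) (S2 : IsStrongSolutionWith b ω τ u2 r2 u2' q2)
    (hPQ : InDomainA P Q)
    (hd : ∀ᵐ t : ℝ, t ∈ Ioo τ T → ∀ᵐ x ∂μ01, 
      0 < u1 t x - u2 t x - Real.exp (N * (t - τ)) * P x →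
      r1 t x - r2 t x - (N * Real.exp (N * (t - τ))) * P x + Real.exp (N * (t - τ)) * Q x ≤
        C * (u1 t x - u2 t x - Real.exp (N * (t - τ)) * P x))
    (h0 : ∀ᵐ x ∂μ01, u1 τ x - u2 τ x - P x ≤ 0) :
    ∀ t ∈ Icc τ T, ∀ᵐ x ∂μ01, u1 t x - u2 t x ≤ Real.exp (N * (t - τ)) * P x := by
  have hed : ∀ t, HasDerivAt (fun t => Real.exp (N * (t - τ))) (N * Real.exp (N * (t - τ))) t := by
    intro t
    refine (((hasDerivAt_id t).sub_const τ).const_mul N).exp.congr_deriv ?_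
    simp [mul_comm]
  have hec : Continuous (fun t => N * Real.exp (N * (t - τ))) := by fun_prop
  have key := comparison (y := fun t => u1 t - u2 t - Real.exp (N * (t - τ)) • P)
    (y' := fun t => u1' t - u2' t - (N * Real.exp (N * (t - τ))) • P) (τ := τ) (T := T) (C := C) ?_ ?_ ?_ ?_
  · intro t ht
    filter_upwards [key t ht, coe_comb (u1 t) (u2 t) P (Real.exp (N * (t - τ)))] with x h1 h2
    rw [h2] at h1
    linarith
  · refine ((S1.cont.mono Icc_subset_Ici_self).sub (S2.cont.mono Icc_subset_Ici_self)).sub ?_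
    refine Continuous.continuousOn ?_
    fun_prop
  · intro T1 T2 h1 h2 _
    obtain ⟨i1, f1⟩ := S1.fund T1 T2 h1 h2
    obtain ⟨i2, f2⟩ := S2.fund T1 T2 h1 h2
    have i3 : ∀ t, IntervalIntegrable (fun t => (N * Real.exp (N * (t - τ))) • P) volume T1 t := by
      intro t
      refine Continuous.intervalIntegrable ?_ _ _
      fun_prop
    refine ⟨(i1.sub i2).sub (i3 _), fun t ht => ?_⟩
    have hsub : uIcc T1 t ⊆ uIcc T1 T2 := by
      rw [uIcc_of_le ht.1, uIcc_of_le h2.le]; exact Icc_subset_Icc_right ht.2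
    have j1 := i1.mono_set hsub
    have j2 := i2.mono_set hsub
    rw [intervalIntegral.integral_sub (j1.sub j2) (i3 t), intervalIntegral.integral_sub j1 j2,
      intervalIntegral.integral_smul_const,
      intervalIntegral.integral_eq_sub_of_hasDerivAt (fun s _ => hed s) (hec.intervalIntegrable _ _),
      f1 t ht, f2 t ht, sub_smul]
    abel
  · have d1 := (ae_restrict_iff' measurableSet_Ioi).1 S1.dom
    have d2 := (ae_restrict_iff' measurableSet_Ioi).1 S2.dom
    have e1 := (ae_restrict_iff' measurableSet_Ioi).1 S1.eq
    have e2 := (ae_restrict_iff' measurableSet_Ioi).1 S2.eq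
    filter_upwards [d1, d2, e1, e2, hd] with t d1 d2 e1 e2 hd ht
    have d1 := d1 ht.1
    have d2 := d2 ht.1
    have hd := hd ht
    set E := Real.exp (N * (t - τ))
    have D0 : InDomainA (u1 t - u2 t - E • P) (q1 t - q2 t - E • Q) := by
      have := domA_comb d1 d2 1
      rw [one_smul, one_smul] at this
      exact domA_comb this hPQ E
    have hdis := domA_dissip D0
    simp only [e1 ht.1, e2 ht.1]
    set y := u1 t - u2 t - E • P with hy
    rw [show r1 t + q1 t - (r2 t + q2 t) - (N * E) • P =
      (q1 t - q2 t - E • Q) + ((r1 t - r2 t - (N * E) • P) - (-E) • Q) by rw [neg_smul]; abel, inner_add_left]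
    have t1 : inner ℝ (q1 t - q2 t - E • Q) (PP y) ≤ 0 := by
      rw [inner_eq]
      refine le_trans (le_of_eq ?_) hdis
      refine integral_congr_ae ?_
      filter_upwards [PP_coe y] with x hx
      rw [hx]
    have t2 : inner ℝ ((r1 t - r2 t - (N * E) • P) - (-E) • Q) (PP y) ≤ C * ‖PP y‖^2 := by
      rw [← real_inner_self_eq_norm_sq, inner_eq, inner_eq, ← integral_const_mul]
      refine integral_mono_ae (inner_int _ _) ((inner_int _ _).const_mul C) ?_
      filter_upwards [hd, PP_coe y, coe_comb (u1 t) (u2 t) P E, coe_comb (r1 t) (r2 t) P (N * E),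
        Lp.coeFn_sub (r1 t - r2 t - (N * E) • P) ((-E) • Q), Lp.coeFn_smul (-E) Q] with x h1 h2 h3 h4 h5 h6
      rw [h5, Pi.sub_apply, h4, h6, Pi.smul_apply, smul_eq_mul, h2, hy, h3]
      rcases le_or_gt (u1 t x - u2 t x - E * P x) 0 with h | h
      · rw [max_eq_right h]; simp
      · rw [max_eq_left h.le, ← mul_assoc]
        refine mul_le_mul_of_nonneg_right ?_ h.le
        linarith [h1 h]
    linarith
  · filter_upwards [h0, coe_comb (u1 τ) (u2 τ) P (Real.exp (N * (τ - τ)))] with x h1 h2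
    rw [h2]
    simpa using h1

lemma domA_zero : InDomainA 0 0 := by
  have h0 := Lp.coeFn_zero ℝ 2 μ01
  refine ⟨fun _ => 0, continuousOn_const, rfl, rfl, ?_, fun _ => 0, fun x _ => hasDerivAt_const _ _, ?_⟩
  · filter_upwards [h0] with x hx
    rw [hx]; rfl
  · intro x hx y hy
    rw [ii_congr h0 hy hx]
    simp

lemma sel_pos {b ω : ℝ → ℝ} {τ : ℝ} {u r u' q : ℝ → Hsp}
    (S : IsStrongSolutionWith b ω τ u r u' q) : ∀ᵐ t : ℝ, τ < t → ∀ᵐ x ∂μ01,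
      (∃ h ∈ Icc (-1:ℝ) 1, r t x = b t * h + ω t * u t x) ∧ (0 < u t x → r t x = b t + ω t * u t x) := by
  filter_upwards [(ae_restrict_iff' measurableSet_Ioi).1 S.sel] with t ht h
  filter_upwards [ht h] with x ⟨k, hk, hr⟩
  refine ⟨⟨k, heav_mem hk, hr⟩, fun hp => ?_⟩
  rw [hr, heav_pos hp hk, mul_one]

lemma lin_le {b ω : ℝ → ℝ} {τ T ω1 : ℝ} {u1 r1 u1' q1 u2 r2 u2' q2 : ℝ → Hsp}
    (hω : ∀ t, ω t ≤ ω1)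
    (S1 : IsStrongSolutionWith b ω τ u1 r1 u1' q1) (S2 : IsStrongSolutionWith b ω τ u2 r2 u2' q2)
    (h1 : ∀ t ∈ Icc τ T, ∀ᵐ x ∂μ01, 0 < u1 t x) (h2 : ∀ t ∈ Icc τ T, ∀ᵐ x ∂μ01, 0 < u2 t x)
    (h0 : u1 τ = u2 τ) : ∀ t ∈ Icc τ T, ∀ᵐ x ∂μ01, u1 t x ≤ u2 t x := by
  have z0 := Lp.coeFn_zero ℝ 2 μ01
  have := step_cmp (T := T) (N := 0) (C := ω1) S1 S2 domA_zero ?_ ?_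
  · intro t ht
    filter_upwards [this t ht, z0] with x hx hz
    rw [hz] at hx
    simpa using hx
  · filter_upwards [sel_pos S1, sel_pos S2] with t s1 s2 ht
    filter_upwards [s1 ht.1, s2 ht.1, h1 t (Ioo_subset_Icc_self ht), h2 t (Ioo_subset_Icc_self ht), z0]
      with x a1 a2 p1 p2 hz hp
    rw [a1.2 p1, a2.2 p2]
    rw [hz] at hp ⊢
    simp only [Pi.zero_apply, mul_zero, sub_zero, add_zero] at hp ⊢
    nlinarith [hω t]
  · filter_upwards [z0] with x hz
    rw [hz, h0]; simp

lemma local_unique {b ω : ℝ → ℝ} {b0 b1 ω0 ω1 : ℝ} (hC : Cond1 b ω b0 b1 ω0 ω1)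
    (hω1 : ω1 < Real.pi ^ 2) {ξ : ℝ → Hsp} (hξ : IsXiM b ω b0 b1 ω0 ω1 ξ) :
    ∃ δ > 0, ∀ τ : ℝ, ∀ w : ℝ → Hsp, IsStrongSolution b ω τ w → w τ = ξ τ →
      ∀ t ∈ Icc τ (τ + δ), w t = ξ t := by
  have hω01 : ω0 ≤ ω1 := (hC.ωlb 0).trans (hC.ωub 0)
  have hω1n : 0 ≤ ω1 := hC.ω0nonneg.trans hω01
  have hb1 : 0 < b1 := hC.b0pos.trans_le ((hC.blb 0).trans (hC.bub 0))
  obtain ⟨c, hc, hcv⟩ := v1plus_lb hC.b0pos hC.ω0nonneg (hω01.trans_lt hω1)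
  have hξlb : ∀ t, ∀ᵐ x ∂μ01, c * (x * (1 - x)) ≤ ξ t x := by
    intro t
    filter_upwards [hξ.bounds t, ae_Ioo] with x h1 h2
    exact (hcv x h2).trans h1.1
  have hξpos : ∀ t, ∀ᵐ x ∂μ01, 0 < ξ t x := by
    intro t
    filter_upwards [hξlb t, ae_Ioo] with x h1 h2
    exact (mul_pos hc (mul_pos h2.1 (sub_pos.2 h2.2))).trans_le h1
  have hE := Real.exp_pos 1
  let K := 2 * b1
  have hK : 0 < K := by positivity
  let m := 4 * K * Real.exp 1 / c
  have hm : 0 < m := by positivity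
  let N := m^2 + ω1
  have hN : 0 < N := by positivity
  obtain ⟨P, Q, hPQ, hPb⟩ := barrier K m hK hm
  refine ⟨1 / N, by positivity, ?_⟩
  rintro τ w ⟨r2, w', q2, S2⟩ h0
  obtain ⟨r1, ξ', q1, S1⟩ := hξ.traj τ
  have hcmp := step_cmp (T := τ + 1 / N) (N := N) (C := ω1) S1 S2 hPQ ?_ ?_
  · have hwpos : ∀ t ∈ Icc τ (τ + 1 / N), ∀ᵐ x ∂μ01, 0 < w t x := by
      intro t ht
      filter_upwards [hcmp t ht, hPb, hξlb t, ae_Ioo] with x h1 ⟨h2, h3, _⟩ h4 hx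
      have hxx : 0 < x * (1 - x) := mul_pos hx.1 (sub_pos.2 hx.2)
      have he : Real.exp (N * (t - τ)) ≤ Real.exp 1 := by
        apply Real.exp_le_exp.2
        have := ht.2
        calc N * (t - τ) ≤ N * (1 / N) := mul_le_mul_of_nonneg_left (by linarith) hN.le
          _ = 1 := by field_simp
      have h5 : Real.exp (N * (t - τ)) * P x ≤ Real.exp 1 * (2 * K / m * (x * (1 - x))) :=
        mul_le_mul he h3 h2 hE.le
      have h6 : Real.exp 1 * (2 * K / m * (x * (1 - x))) = c / 2 * (x * (1 - x)) := by
        simp only [m]; field_simp; ring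
      have h7 : 0 < c * (x * (1 - x)) := mul_pos hc hxx
      linarith
    have l1 := lin_le hC.ωub S1 S2 (fun t _ => hξpos t) hwpos h0.symm
    have l2 := lin_le hC.ωub S2 S1 hwpos (fun t _ => hξpos t) h0
    intro t ht
    apply Lp.ext
    filter_upwards [l1 t ht, l2 t ht] with x a1 a2
    exact le_antisymm a2 a1
  · filter_upwards [sel_pos S1, sel_pos S2] with t s1 s2 ht
    filter_upwards [s1 ht.1, s2 ht.1, hξpos t, hPb] with x a1 a2 p1 ⟨hP0, _, hPQ⟩ hp
    obtain ⟨h, hh, hr⟩ := a2.1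
    rw [a1.2 p1, hr]
    have hE1 : 1 ≤ Real.exp (N * (t - τ)) := Real.one_le_exp (mul_nonneg hN.le (by linarith [ht.1]))
    set E := Real.exp (N * (t - τ))
    have k1 : b t * (1 - h) ≤ K := by
      have := hC.bub t
      have := hC.b0pos.trans_le (hC.blb t)
      have := hh.1
      simp only [K]
      nlinarith [hh.1]
    have k2 : K ≤ E * (m^2 * P x - Q x) := by nlinarith
    have k3 : ω t * (ξ t x - w t x) ≤ ω1 * (ξ t x - w t x) := by
      refine mul_le_mul_of_nonneg_right (hC.ωub t) ?_
      have : 0 ≤ E * P x := mul_nonneg (by linarith) hP0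
      linarith
    simp only [N]
    nlinarith
  · filter_upwards [hPb] with x hx
    rw [h0]; linarith [hx.1]

lemma sol_mono {b ω : ℝ → ℝ} {τ τ' : ℝ} (h : τ ≤ τ') {w : ℝ → Hsp} (S : IsStrongSolution b ω τ w) :
    IsStrongSolution b ω τ' w := by
  obtain ⟨r, w', q, S⟩ := S
  have hs : Ioi τ' ⊆ Ioi τ := Ioi_subset_Ioi h
  refine ⟨r, w', q, S.cont.mono (Ici_subset_Ici.2 h), fun T hT => ?_, 
    ae_restrict_of_ae_restrict_of_subset hs S.sel, ae_restrict_of_ae_restrict_of_subset hs S.dom,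
    ae_restrict_of_ae_restrict_of_subset hs S.eq, fun T1 T2 h1 h2 => S.fund T1 T2 (h.trans_lt h1) h2⟩
  exact (S.rmem T (h.trans_lt hT)).mono_measure (Measure.restrict_mono (Ioo_subset_Ioo_left h) le_rfl)

lemma fwd_unique {b ω : ℝ → ℝ} {b0 b1 ω0 ω1 : ℝ} (hC : Cond1 b ω b0 b1 ω0 ω1)
    (hω1 : ω1 < Real.pi ^ 2) {ξ : ℝ → Hsp} (hξ : IsXiM b ω b0 b1 ω0 ω1 ξ)
    (τ : ℝ) (w : ℝ → Hsp) (hw : IsStrongSolution b ω τ w) (h0 : w τ = ξ τ) :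
    ∀ t, τ ≤ t → w t = ξ t := by
  obtain ⟨δ, hδ, hloc⟩ := local_unique hC hω1 hξ
  have hn : ∀ n : ℕ, ∀ t ∈ Icc τ (τ + n * δ), w t = ξ t := by
    intro n
    induction n with
    | zero =>
      intro t ht
      have : t = τ := le_antisymm (by simpa using ht.2) ht.1
      rw [this, h0]
    | succ k ih =>
      intro t ht
      rcases le_total t (τ + k * δ) with h | h
      · exact ih t ⟨ht.1, h⟩
      · have hk : τ ≤ τ + k * δ := by have : (0:ℝ) ≤ k * δ := by positivity
                                      linarith
        refine hloc (τ + k * δ) w (sol_mono hk hw) (ih _ ⟨hk, le_rfl⟩) t ⟨h, ?_⟩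
        have := ht.2
        push_cast at this
        linarith
  intro t ht
  obtain ⟨n, hn'⟩ := exists_nat_ge ((t - τ) / δ)
  refine hn n t ⟨ht, ?_⟩
  rw [div_le_iff₀ hδ] at hn'
  linarith

lemma bwd_unique {b ω : ℝ → ℝ} {b0 b1 ω0 ω1 : ℝ} (hC : Cond1 b ω b0 b1 ω0 ω1)
    (hω1 : ω1 < Real.pi ^ 2) {ξ : ℝ → Hsp} (hξ : IsXiM b ω b0 b1 ω0 ω1 ξ)
    (γ : ℝ → Hsp) (hγ : IsCompleteTrajectory b ω γ) (hb : BddTraj γ) (t₀ : ℝ)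
    (hD : ∀ t ≤ t₀, InD (γ t)) : γ t₀ = ξ t₀ := by
  have hsc : Continuous (fun x : ℝ => Real.sin (Real.pi * x)) := by fun_prop
  have hsm : MemLp (fun x : ℝ => Real.sin (Real.pi * x)) 2 μ01 := by
    refine MemLp.of_bound hsc.aestronglyMeasurable 1 (Eventually.of_forall fun x => ?_)
    exact Real.abs_sin_le_one _
  let S : Hsp := hsm.toLp
  have hS : ∀ᵐ x ∂μ01, S x = Real.sin (Real.pi * x) := hsm.coeFn_toLp
  have hSpos : ∀ᵐ x ∂μ01, 0 < S x := by
    filter_upwards [hS, ae_Ioo] with x h hx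
    rw [h]
    exact Real.sin_pos_of_pos_of_lt_pi (mul_pos Real.pi_pos hx.1) (by nlinarith [hx.2, Real.pi_pos])
  let L : Hsp →L[ℝ] Hsp := (innerSL ℝ S).smulRight S
  have hL : ∀ v, L v = (inner ℝ S v : ℝ) • S := fun v => rfl
  have hξpos : ∀ t, ∀ᵐ x ∂μ01, 0 < ξ t x := by
    intro t
    obtain ⟨vt, _, h2, h3⟩ := hξ.pos t
    filter_upwards [h2, ae_Ioo] with x h hx
    rw [← h]; exact h3 x hx
  have hγpos : ∀ t ≤ t₀, ∀ᵐ x ∂μ01, 0 < γ t x := by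
    intro t ht
    obtain ⟨vt, ⟨_, _, _, h2, _⟩, h3⟩ := hD t ht
    filter_upwards [h2, ae_Ioo] with x h hx
    rw [← h]; exact h3 x hx
  have hz : ∀ t, ∀ᵐ x ∂μ01, 0 ≤ (ξ t - γ t : Hsp) x := by
    intro t
    filter_upwards [hξ.dominates γ hγ hb t, Lp.coeFn_sub (ξ t) (γ t)] with x h1 h2
    rw [h2, Pi.sub_apply]; linarith [h1.2]
  have hφ : ∀ t, 0 ≤ inner ℝ S (ξ t - γ t) := by
    intro t
    rw [inner_eq]
    refine integral_nonneg_of_ae ?_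
    filter_upwards [hz t, hSpos] with x h1 h2
    exact mul_nonneg h2.le h1
  have hPP : ∀ t, PP (L (ξ t - γ t)) = L (ξ t - γ t) := by
    intro t
    apply Lp.ext
    filter_upwards [PP_coe (L (ξ t - γ t)), hSpos, Lp.coeFn_smul (inner ℝ S (ξ t - γ t) : ℝ) S] with x h1 h2 h3
    rw [h1, hL, h3]
    exact max_eq_left (mul_nonneg (hφ t) h2.le)
  set κ := Real.pi^2 - ω1 with hκ
  have hκ0 : 0 < κ := sub_pos.2 hω1
  have hdec : ∀ a < t₀, Real.exp (2 * κ * t₀) * ‖L (ξ t₀ - γ t₀)‖^2 ≤ 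
      Real.exp (2 * κ * a) * ‖L (ξ a - γ a)‖^2 := by
    intro a ha
    obtain ⟨r1, ξ', q1, S1⟩ := hξ.traj (a - 1)
    obtain ⟨r2, γ', q2, S2⟩ := hγ (a - 1)
    obtain ⟨i1, f1⟩ := S1.fund a t₀ (by linarith) ha
    obtain ⟨i2, f2⟩ := S2.fund a t₀ (by linarith) ha
    have i3 := i1.sub i2
    have := energy_step (y := fun t => L (ξ t - γ t)) (y' := fun t => L (ξ' t - γ' t)) (C := -κ) ha.le ?_ ?_ ?_
    · simp only [hPP] at this
      simpa using this
    · exact ⟨L.integrable_comp i3.1, L.integrable_comp i3.2⟩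
    · intro t ht
      have hsub : uIcc a t ⊆ uIcc a t₀ := by
        rw [uIcc_of_le ht.1, uIcc_of_le ha.le]; exact Icc_subset_Icc_right ht.2
      have j1 := i1.mono_set hsub
      have j2 := i2.mono_set hsub
      have := L.intervalIntegral_comp_comm (j1.sub j2)
      rw [this, intervalIntegral.integral_sub j1 j2, ← map_add, f1 t ht, f2 t ht]
      congr 1
      abel
    · have d1 := (ae_restrict_iff' measurableSet_Ioi).1 S1.dom
      have d2 := (ae_restrict_iff' measurableSet_Ioi).1 S2.dom
      have e1 := (ae_restrict_iff' measurableSet_Ioi).1 S1.eq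
      have e2 := (ae_restrict_iff' measurableSet_Ioi).1 S2.eq
      filter_upwards [d1, d2, e1, e2, sel_pos S1, sel_pos S2] with t d1 d2 e1 e2 s1 s2 ht
      have hat : a - 1 < t := by linarith [ht.1]
      rw [hPP]
      have D0 : InDomainA (ξ t - γ t) (q1 t - q2 t) := by
        have := domA_comb (d1 hat) (d2 hat) 1
        rwa [one_smul, one_smul] at this
      have hsin := domA_sin D0
      have ei : ∀ v : Hsp, ∫ x, v x * Real.sin (Real.pi * x) ∂μ01 = inner ℝ S v := by
        intro v
        rw [inner_eq]
        refine integral_congr_ae ?_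
        filter_upwards [hS] with x hx
        rw [hx, mul_comm]
      rw [ei, ei] at hsin
      have hr : r1 t - r2 t = ω t • (ξ t - γ t) := by
        apply Lp.ext
        filter_upwards [s1 hat, s2 hat, hξpos t, hγpos t ht.2.le, Lp.coeFn_sub (r1 t) (r2 t),
          Lp.coeFn_smul (ω t) (ξ t - γ t), Lp.coeFn_sub (ξ t) (γ t)] with x a1 a2 p1 p2 h1 h2 h3
        rw [h1, h2, Pi.sub_apply, Pi.smul_apply, h3, Pi.sub_apply, a1.2 p1, a2.2 p2, smul_eq_mul]
        ring
      have hin : inner ℝ S (ξ' t - γ' t) = (ω t - Real.pi^2) * inner ℝ S (ξ t - γ t) := by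
        rw [e1 hat, e2 hat, show r1 t + q1 t - (r2 t + q2 t) = (r1 t - r2 t) + (q1 t - q2 t) by abel, hr,
          inner_add_right, hsin, inner_smul_right]
        ring
      rw [← real_inner_self_eq_norm_sq, hL, hL, hin, mul_smul, inner_smul_left]
      simp only [conj_trivial]
      refine mul_le_mul_of_nonneg_right ?_ real_inner_self_nonneg
      have := hC.ωub t
      rw [hκ]; linarith
  have hzero : L (ξ t₀ - γ t₀) = 0 := by
    obtain ⟨M1, hM1⟩ := hξ.bdd
    obtain ⟨M2, hM2⟩ := hb
    have hbd : ∀ a, ‖L (ξ a - γ a)‖^2 ≤ (‖L‖ * (M1 + M2))^2 := by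
      intro a
      refine pow_le_pow_left₀ (norm_nonneg _) ?_ 2
      refine (L.le_opNorm _).trans (mul_le_mul_of_nonneg_left ?_ (norm_nonneg _))
      exact (norm_sub_le _ _).trans (add_le_add (hM1 a) (hM2 a))
    have hlim : Tendsto (fun a => Real.exp (2 * κ * a) * (‖L‖ * (M1 + M2))^2) atBot (𝓝 0) := by
      have h1 : Tendsto (fun a : ℝ => 2 * κ * a) atBot atBot :=
        tendsto_id.const_mul_atBot (by positivity)
      simpa using (Real.tendsto_exp_atBot.comp h1).mul_const ((‖L‖ * (M1 + M2))^2)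
    have hle : Real.exp (2 * κ * t₀) * ‖L (ξ t₀ - γ t₀)‖^2 ≤ 0 := by
      refine ge_of_tendsto hlim ?_
      filter_upwards [eventually_lt_atBot t₀] with a ha
      exact (hdec a ha).trans (mul_le_mul_of_nonneg_left (hbd a) (Real.exp_pos _).le)
    by_contra hne
    have := norm_pos_iff.2 hne
    have : 0 < Real.exp (2 * κ * t₀) * ‖L (ξ t₀ - γ t₀)‖^2 := by positivity
    linarith
  have hi0 : inner ℝ S (ξ t₀ - γ t₀) = 0 := by
    rw [hL] at hzero
    rcases smul_eq_zero.1 hzero with h | h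
    · exact h
    · rw [h, inner_zero_left]
  rw [inner_eq, integral_eq_zero_iff_of_nonneg_ae ?_ (inner_int _ _)] at hi0
  · apply Lp.ext
    filter_upwards [hi0, hSpos, Lp.coeFn_sub (ξ t₀) (γ t₀)] with x h1 h2 h3
    have := (mul_eq_zero.1 h1).resolve_left h2.ne'
    rw [h3, Pi.sub_apply] at this
    linarith
  · filter_upwards [hz t₀, hSpos] with x h1 h2
    exact mul_nonneg h2.le h1

/-- (i) `ξ_M` is the unique non-negative bounded complete
trajectory which is non-degenerate at `−∞`, and the solution starting at any
point `ξ_M(τ)` is unique among non-negative solutions; (ii) if additionally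
`b, ω ∈ W^{1,2}_loc(ℝ)`, then `ξ_M` is the unique bounded complete trajectory
which is non-degenerate at `−∞` and the solution starting at `ξ_M(τ)` is unique
in the class of all solutions. -/
theorem statement13
    (b ω : ℝ → ℝ) (b0 b1 ω0 ω1 : ℝ) (hC : Cond1 b ω b0 b1 ω0 ω1)
    (hω1 : ω1 < Real.pi ^ 2)
    (ξ : ℝ → Hsp) (hξ : IsXiM b ω b0 b1 ω0 ω1 ξ) :
    ((∀ γ : ℝ → Hsp, IsCompleteTrajectory b ω γ → BddTraj γ →
        (∀ t : ℝ, ∀ᵐ x ∂μ01, 0 ≤ γ t x) →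
        (∃ t₀ : ℝ, ∀ t ≤ t₀, InD (γ t)) →
        ∀ t : ℝ, γ t = ξ t) ∧
      ∀ τ : ℝ, ∀ w : ℝ → Hsp, IsStrongSolution b ω τ w → NonnegOn w τ →
        w τ = ξ τ → ∀ t, τ ≤ t → w t = ξ t) ∧
    (W12loc b → W12loc ω →
      (∀ γ : ℝ → Hsp, IsCompleteTrajectory b ω γ → BddTraj γ →
        (∃ t₀ : ℝ, ∀ t ≤ t₀, InD (γ t)) →
        ∀ t : ℝ, γ t = ξ t) ∧
      ∀ τ : ℝ, ∀ w : ℝ → Hsp, IsStrongSolution b ω τ w →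
        w τ = ξ τ → ∀ t, τ ≤ t → w t = ξ t) := by
  have hA : ∀ γ : ℝ → Hsp, IsCompleteTrajectory b ω γ → BddTraj γ →
      (∃ t₀ : ℝ, ∀ t ≤ t₀, InD (γ t)) → ∀ t : ℝ, γ t = ξ t := by
    rintro γ hγ hb ⟨t₀, hD⟩ t
    rcases le_total t t₀ with h | h
    · exact bwd_unique hC hω1 hξ γ hγ hb t (fun s hs => hD s (hs.trans h))
    · exact fwd_unique hC hω1 hξ t₀ γ (hγ t₀) (bwd_unique hC hω1 hξ γ hγ hb t₀ hD) t h
  exact ⟨⟨fun γ h1 h2 _ h4 => hA γ h1 h2 h4, fun τ w h1 _ h3 => fwd_unique hC hω1 hξ τ w h1 h3⟩,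
    fun _ _ => ⟨hA, fun τ w h1 h3 => fwd_unique hC hω1 hξ τ w h1 h3⟩⟩

end
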